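/- arXiv:2306.07460 — 4 statements merged into one kernel-verified Lean document; each statement's English description precedes it below -/
import Mathlib

section
/- Let f : (0, ∞) → ℝ be differentiable and satisfy the Riccati differential inequality f'(t) ≤ -f(t)²/2 for all t > 0. Then f(t) ≥ 0 for all t > 0. -/
/-!
Suppose `f t₀ < 0`. Since `f' ≤ 0`, the function `f` stays negative on `[t₀, ∞)`, so `1 / f` is
differentiable there, with `(1 / f)' = -f' / f² ≥ 1 / 2`. Hence `1 / f` grows at least linearly
and reaches a nonnegative value no later than `t₀ - 2 / f t₀`, which is absurd as `f < 0` there.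
-/

/-- Let `f : (0, ∞) → ℝ` be differentiable and satisfy the Riccati
differential inequality `f'(t) ≤ -f(t)²/2` for all `t > 0`. Then `f(t) ≥ 0` for all `t > 0`. -/
theorem riccati_nonneg (f f' : ℝ → ℝ)
    (hderiv : ∀ t : ℝ, 0 < t → HasDerivAt f (f' t) t)
    (hineq : ∀ t : ℝ, 0 < t → f' t ≤ -(f t) ^ 2 / 2) :
    ∀ t : ℝ, 0 < t → 0 ≤ f t := by
  intro t₀ ht₀
  by_contra! hneg
  have hpos : ∀ t ∈ Set.Ici t₀, 0 < t := fun t ht => ht₀.trans_le ht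
  have hanti : AntitoneOn f (Set.Ici t₀) := by
    refine antitoneOn_of_hasDerivWithinAt_nonpos (f' := f') (convex_Ici t₀)
      (fun t ht => (hderiv t (hpos t ht)).continuousAt.continuousWithinAt)
      (fun t ht => (hderiv t (hpos t (interior_subset ht))).hasDerivWithinAt)
      (fun t ht => ?_)
    have := hineq t (hpos t (interior_subset ht))
    nlinarith [sq_nonneg (f t)]
  have hlt : ∀ t ∈ Set.Ici t₀, f t < 0 := fun t ht =>
    (hanti Set.self_mem_Ici ht ht).trans_lt hneg
  have hd : ∀ t ∈ Set.Ici t₀,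
      HasDerivAt (fun s => (f s)⁻¹ - s / 2) (-f' t / f t ^ 2 - 1 / 2) t := fun t ht =>
    ((hderiv t (hpos t ht)).fun_inv (hlt t ht).ne).sub ((hasDerivAt_id' t).div_const 2)
  have hmono : MonotoneOn (fun s => (f s)⁻¹ - s / 2) (Set.Ici t₀) := by
    refine monotoneOn_of_hasDerivWithinAt_nonneg (convex_Ici t₀)
      (fun t ht => (hd t ht).continuousAt.continuousWithinAt)
      (fun t ht => (hd t (interior_subset ht)).hasDerivWithinAt)
      (fun t ht => ?_)
    have h := hineq t (hpos t (interior_subset ht))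
    have hsq : 0 < f t ^ 2 := sq_pos_of_neg (hlt t (interior_subset ht))
    rw [sub_nonneg, le_div_iff₀ hsq]
    linarith
  have hinv : (f t₀)⁻¹ < 0 := inv_lt_zero.mpr hneg
  have hT : t₀ - 2 * (f t₀)⁻¹ ∈ Set.Ici t₀ := by
    rw [Set.mem_Ici]
    linarith
  have hle := hmono Set.self_mem_Ici hT hT
  have hTinv := inv_lt_zero.mpr (hlt _ hT)
  dsimp only at hle
  linarith
end

section
/- Let J : (0, ∞) → ℝ be twice differentiable with J(t) > 0 for all t > 0, and suppose 2·J''(t)·J(t) ≤ (J'(t))² for all t > 0. Then J'(t) ≥ 0 for all t > 0. -/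
/-!
The hypothesis says exactly that `√J` is concave, since
`(√J)'' = (2 J'' J - (J')²) / (4 J √J)`. A concave function on `(0, ∞)` lies below its tangent
lines, so if its derivative were negative somewhere it would eventually become negative; as
`√J > 0` this is impossible, and `(√J)' = J' / (2 √J)` has the sign of `J'`.
-/

/-- Let `J : (0, ∞) → ℝ` be twice differentiable with `J(t) > 0` for all
`t > 0`, and suppose `2·J''(t)·J(t) ≤ (J'(t))²` for all `t > 0`. Then `J'(t) ≥ 0` for all
`t > 0`. -/
theorem deriv_nonneg_of_log_deriv_riccati (J J' J'' : ℝ → ℝ)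
    (hJ' : ∀ t : ℝ, 0 < t → HasDerivAt J (J' t) t)
    (hJ'' : ∀ t : ℝ, 0 < t → HasDerivAt J' (J'' t) t)
    (hJpos : ∀ t : ℝ, 0 < t → 0 < J t)
    (hineq : ∀ t : ℝ, 0 < t → 2 * J'' t * J t ≤ (J' t) ^ 2) :
    ∀ t : ℝ, 0 < t → 0 ≤ J' t := by
  have hg : ∀ t : ℝ, 0 < t → HasDerivAt (fun s => √(J s)) (J' t / (2 * √(J t))) t :=
    fun t ht => (hJ' t ht).sqrt (hJpos t ht).ne'
  have hg' : ∀ t : ℝ, 0 < t → HasDerivAt (fun s => J' s / (2 * √(J s)))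
      ((2 * J'' t * J t - J' t ^ 2) / (4 * J t * √(J t))) t := by
    intro t ht
    have hs : 0 < √(J t) := Real.sqrt_pos.2 (hJpos t ht)
    have hsq : √(J t) ^ 2 = J t := Real.sq_sqrt (hJpos t ht).le
    refine ((hJ'' t ht).div ((hg t ht).const_mul 2) (by positivity)).congr_deriv ?_
    generalize √(J t) = s at hs hsq
    rw [← hsq]
    field_simp
    ring
  have hconc : ConcaveOn ℝ (Set.Ioi 0) (fun s => √(J s)) := by
    refine concaveOn_of_hasDerivWithinAt2_nonpos (convex_Ioi 0)
      (f' := fun s => J' s / (2 * √(J s)))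
      (f'' := fun t => (2 * J'' t * J t - J' t ^ 2) / (4 * J t * √(J t)))
      (fun t ht => (hg t ht).continuousAt.continuousWithinAt) ?_ ?_ ?_ <;>
      rw [interior_Ioi] <;> intro t ht
    · exact (hg t ht).hasDerivWithinAt
    · exact (hg' t ht).hasDerivWithinAt
    · have := hJpos t ht
      exact div_nonpos_of_nonpos_of_nonneg (sub_nonpos.2 (hineq t ht)) (by positivity)
  intro t ht
  by_contra! hneg
  have hs : 0 < √(J t) := Real.sqrt_pos.2 (hJpos t ht)
  set c := J' t / (2 * √(J t)) with hc
  have hc0 : c < 0 := div_neg_of_neg_of_pos hneg (by positivity)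
  -- The point `u` is where the tangent line to `√J` at `t` vanishes.
  obtain ⟨u, hu⟩ : ∃ u, u = t + √(J t) / (-c) := ⟨_, rfl⟩
  have hd : 0 < √(J t) / (-c) := div_pos hs (neg_pos.2 hc0)
  have htu : t < u := by linarith
  have hu0 : 0 < u := ht.trans htu
  have hslope := hconc.slope_le_of_hasDerivAt (x := t) (y := u) ht hu0 htu (hg t ht)
  rw [slope_def_field, div_le_iff₀ (sub_pos.2 htu), ← hc] at hslope
  have hmul : c * (u - t) = -√(J t) := by
    have hcne : c ≠ 0 := hc0.ne
    rw [hu]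
    field_simp
    ring
  have hsu : 0 < √(J u) := Real.sqrt_pos.2 (hJpos u hu0)
  linarith
end

section
/- Let t₀ ∈ ℝ, T ∈ (t₀, ∞], c > 0, and let f : [t₀, T) → ℝ be differentiable with f'(t) ≤ -f(t)²/2 for all t ∈ [t₀, T), and f(t₀) = -c. Then T ≤ t₀ + 2/c; that is, f cannot remain finite on an interval of length greater than 2/c beyond t₀. -/
/-! The reciprocal linearizes the Riccati inequality. Since `f' ≤ 0`, the function `f` stays
`≤ -c < 0`, so `1 / f` is differentiable with derivative `-f' / f² ≥ 1 / 2`. If `T` exceeded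
`b = t₀ + 2 / c`, integrating from `t₀` to `b` would give `1 / f b ≥ -1 / c + 1 / c = 0`,
contradicting `f b < 0`. -/

/-- Let `t₀ ∈ ℝ`, `T ∈ (t₀, ∞]`, `c > 0`, and let `f : [t₀, T) → ℝ` be
differentiable with `f'(t) ≤ -f(t)²/2` for all `t ∈ [t₀, T)`, and `f(t₀) = -c`. Then
`T ≤ t₀ + 2/c`; that is, `f` cannot remain finite on an interval of length greater than
`2/c` beyond `t₀`. -/
theorem riccati_blow_up (t₀ : ℝ) (T : EReal) (hT : (t₀ : EReal) < T) (c : ℝ) (hc : 0 < c)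
    (f f' : ℝ → ℝ)
    (hderiv : ∀ t : ℝ, t₀ ≤ t → (t : EReal) < T →
      HasDerivWithinAt f (f' t) {s : ℝ | t₀ ≤ s ∧ (s : EReal) < T} t)
    (hineq : ∀ t : ℝ, t₀ ≤ t → (t : EReal) < T → f' t ≤ -(f t) ^ 2 / 2)
    (hinit : f t₀ = -c) :
    T ≤ ((t₀ + 2 / c : ℝ) : EReal) := by
  by_contra! hlt
  set b : ℝ := t₀ + 2 / c with hb
  have hb0 : t₀ ≤ b := by
    have : 0 < 2 / c := by positivity
    linarith
  have hbT : ∀ t ∈ Set.Icc t₀ b, (t : EReal) < T := fun t ht =>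
    (EReal.coe_le_coe_iff.2 ht.2).trans_lt hlt
  have hd : ∀ t ∈ Set.Icc t₀ b, HasDerivWithinAt f (f' t) (Set.Icc t₀ b) t := fun t ht =>
    (hderiv t ht.1 (hbT t ht)).mono fun s hs => ⟨hs.1, hbT s hs⟩
  have hanti : AntitoneOn f (Set.Icc t₀ b) := by
    refine antitoneOn_of_hasDerivWithinAt_nonpos (convex_Icc _ _)
      (fun t ht => (hd t ht).continuousWithinAt)
      (fun t ht => (hd t (interior_subset ht)).mono interior_subset) fun t ht => ?_
    have ht' := interior_subset ht
    nlinarith [hineq t ht'.1 (hbT t ht'), sq_nonneg (f t)]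
  have hneg : ∀ t ∈ Set.Icc t₀ b, f t < 0 := fun t ht => by
    linarith [hanti (Set.left_mem_Icc.2 hb0) ht ht.1]
  have hg : ∀ t ∈ Set.Icc t₀ b,
      HasDerivWithinAt (fun s => (f s)⁻¹ - s / 2) (-f' t / f t ^ 2 - 1 / 2) (Set.Icc t₀ b) t :=
    fun t ht => ((hd t ht).fun_inv (hneg t ht).ne).sub ((hasDerivWithinAt_id t _).div_const 2)
  have hmono : MonotoneOn (fun s => (f s)⁻¹ - s / 2) (Set.Icc t₀ b) := by
    refine monotoneOn_of_hasDerivWithinAt_nonneg (convex_Icc _ _)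
      (fun t ht => (hg t ht).continuousWithinAt)
      (fun t ht => (hg t (interior_subset ht)).mono interior_subset) fun t ht => ?_
    have ht' := interior_subset ht
    have hsq : 0 < f t ^ 2 := sq_pos_of_neg (hneg t ht')
    rw [sub_nonneg, le_div_iff₀ hsq]
    linarith [hineq t ht'.1 (hbT t ht')]
  have key := hmono (Set.left_mem_Icc.2 hb0) (Set.right_mem_Icc.2 hb0) hb0
  have hinv : (f b)⁻¹ < 0 := inv_lt_zero.2 (hneg b (Set.right_mem_Icc.2 hb0))
  have hc2 : b / 2 = t₀ / 2 + c⁻¹ := by rw [hb]; field_simp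
  simp only [hinit, inv_neg] at key
  linarith
end

section
/- Let 𝒜 : (0, ∞) → ℝ be nonnegative and locally integrable, suppose the function t ↦ 𝒜(t)/t² is nonincreasing on (0, ∞), and suppose lim_{r→∞} (1/r³)·∫_0^r 𝒜(t) dt = c/3 for some c ≥ 0. Then lim_{r→∞} 𝒜(r)/r² = c. -/
open Filter Topology MeasureTheory intervalIntegral

/-!
Write `V r = ∫_0^r 𝒜` and `D r = (V (2r) - V r) / r³`, the normalized volume of the dyadic shell
`[r, 2r]`. Since `𝒜 t = (𝒜 t / t²) · t²` and `𝒜 t / t²` is nonincreasing, integrating over the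
shell gives `7/3 · 𝒜(2r)/(2r)² ≤ D r ≤ 7/3 · 𝒜(r)/r²` (`shell_integral_bounds`). Hence `𝒜(r)/r²` is
squeezed between `3/7 · D r` and `3/7 · D (r/2)`, and the hypothesis on `V` forces
`D r → 8 · c/3 - c/3 = 7c/3`.
-/

/-- If `f t / t²` is nonincreasing, then over `[a, b]` the function `f` lies between the quadratics
`(f b / b²) t²` and `(f a / a²) t²`, hence so do the integrals. -/
lemma shell_integral_bounds {f : ℝ → ℝ} {a b : ℝ} (ha : 0 < a) (hab : a ≤ b)
    (hint : IntervalIntegrable f volume a b)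
    (hmono : AntitoneOn (fun t : ℝ => f t / t ^ 2) (Set.Ioi 0)) :
    f b / b ^ 2 * ((b ^ 3 - a ^ 3) / 3) ≤ ∫ t in a..b, f t ∧
      ∫ t in a..b, f t ≤ f a / a ^ 2 * ((b ^ 3 - a ^ 3) / 3) := by
  have hquad : ∀ k : ℝ, ∫ t in a..b, k * t ^ 2 = k * ((b ^ 3 - a ^ 3) / 3) := by
    intro k
    rw [intervalIntegral.integral_const_mul, integral_pow]
    norm_num
  have hquad_int : ∀ k : ℝ, IntervalIntegrable (fun t : ℝ => k * t ^ 2) volume a b :=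
    fun k => (by fun_prop : Continuous fun t : ℝ => k * t ^ 2).intervalIntegrable a b
  have hb : 0 < b := ha.trans_le hab
  rw [← hquad, ← hquad]
  constructor
  · refine integral_mono_on hab (hquad_int _) hint fun t ht => ?_
    have ht0 : 0 < t := ha.trans_le ht.1
    exact (le_div_iff₀ (by positivity)).1 (hmono ht0 hb ht.2)
  · refine integral_mono_on hab hint (hquad_int _) fun t ht => ?_
    have ht0 : 0 < t := ha.trans_le ht.1
    exact (div_le_iff₀ (by positivity)).1 (hmono ha ht0 ht.1)

/-- Let `𝒜 : (0, ∞) → ℝ` be nonnegative and locally integrable, suppose the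
function `t ↦ 𝒜(t)/t²` is nonincreasing on `(0, ∞)`, and suppose
`lim_{r→∞} (1/r³)·∫_0^r 𝒜(t) dt = c/3` for some `c ≥ 0`. Then `lim_{r→∞} 𝒜(r)/r² = c`. -/
theorem sphere_area_ratio_limit_of_volume_ratio_limit (𝒜 : ℝ → ℝ) (c : ℝ) (hc : 0 ≤ c)
    (hnonneg : ∀ t : ℝ, 0 < t → 0 ≤ 𝒜 t)
    (hint : ∀ r : ℝ, 0 < r → IntervalIntegrable 𝒜 volume 0 r)
    (hmono : AntitoneOn (fun t : ℝ => 𝒜 t / t ^ 2) (Set.Ioi 0))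
    (hlim : Tendsto (fun r : ℝ => (1 / r ^ 3) * ∫ t in (0 : ℝ)..r, 𝒜 t) atTop (𝓝 (c / 3))) :
    Tendsto (fun r : ℝ => 𝒜 r / r ^ 2) atTop (𝓝 c) := by
  -- `W r = V r / r³`; the shell quantity `3/7 · D r` equals `3/7 · (8 · W (2r) - W r)`.
  set W : ℝ → ℝ := fun r => (1 / r ^ 3) * ∫ t in (0 : ℝ)..r, 𝒜 t with hW
  have hV : ∀ r : ℝ, 0 < r → ∫ t in (0 : ℝ)..r, 𝒜 t = r ^ 3 * W r := by
    intro r hr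
    simp only [hW]
    field_simp
  have hshell : ∀ r : ℝ, 0 < r →
      𝒜 (2 * r) / (2 * r) ^ 2 ≤ 3 / 7 * (8 * W (2 * r) - W r) ∧
        3 / 7 * (8 * W (2 * r) - W r) ≤ 𝒜 r / r ^ 2 := by
    intro r hr
    have h2r : 0 < 2 * r := by positivity
    have hr3 : 0 < r ^ 3 := by positivity
    have hdiff := integral_interval_sub_left (hint _ h2r) (hint r hr)
    obtain ⟨h1, h2⟩ := shell_integral_bounds hr (by linarith : r ≤ 2 * r)
      ((hint r hr).symm.trans (hint _ h2r)) hmono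
    rw [← hdiff, hV r hr, hV _ h2r] at h1 h2
    constructor
    · refine le_of_mul_le_mul_right ?_ hr3
      linear_combination 3 / 7 * h1
    · refine le_of_mul_le_mul_right ?_ hr3
      linear_combination 3 / 7 * h2
  have hD : Tendsto (fun r : ℝ => 3 / 7 * (8 * W (2 * r) - W r)) atTop (𝓝 c) := by
    have h2 : Tendsto (fun r : ℝ => 2 * r) atTop atTop :=
      tendsto_id.const_mul_atTop (by norm_num)
    have h := (((hlim.comp h2).const_mul 8).sub hlim).const_mul (3 / 7)
    have hval : 3 / 7 * (8 * (c / 3) - c / 3) = c := by ring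
    rwa [hval] at h
  have hhalf : Tendsto (fun r : ℝ => r / 2) atTop atTop :=
    tendsto_id.atTop_div_const (by norm_num)
  refine tendsto_of_tendsto_of_tendsto_of_le_of_le' hD (hD.comp hhalf) ?_ ?_
  · filter_upwards [eventually_gt_atTop 0] with r hr using (hshell r hr).2
  · filter_upwards [eventually_gt_atTop 0] with r hr
    have h := (hshell (r / 2) (by positivity)).1
    have hrr : 2 * (r / 2) = r := by ring
    simpa only [Function.comp_apply, hrr] using h
end
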